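/- Fix a real h with 1/2 < h ≤ 1, so that δ := h² − 1/4 > 0. Then there exist constants α > 0 and C > 0 (depending only on h) such that for all positive integers n_A, n_B, n_C with n_A, n_B ≥ 1, setting d_A = 2^{n_A}, d_B = 2^{n_B}, d_C = 2^{n_C}, d = d_A·d_B·d_C, and letting ψ = U e₁ be a Haar random state on ℂ^{d_A}⊗ℂ^{d_B}⊗ℂ^{d_C} with reduced density matrix ρ_AB, the Haar probability that at least one EPR pair is LU-distillable — i.e., that there exist unitaries U_A ∈ U(d_A), U_B ∈ U(d_B) with Tr[(U_A⊗U_B) ρ_AB (U_A⊗U_B)† Π₁] ≥ h², where Π₁ is the EPR projector on the first qubit of A and the first qubit of B tensored with the identity — satisfies: log Prob ≤ −α·d + C·(d_A² + d_B²). -/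

import Mathlib

/-!
Theorem 1 (informal) of the paper: for a tripartite Haar random state, the
probability that at least one EPR pair is LU-distillable (at fidelity tolerance
`1/2 < h ≤ 1`) between `A` and `B` is exponentially suppressed in
`d = d_A d_B d_C`: `log Prob ≤ -α d + C (d_A² + d_B²)`.
-/

open MeasureTheory Matrix
open scoped Kronecker Classical

noncomputable section

/-- `ℂ²` tensor factors: a basis index for `(ℂ²)^{⊗ n}`. -/
abbrev QubitIdx (n : ℕ) := Fin n → Fin 2

instance matrixMeasurableSpace (I : Type*) : MeasurableSpace (Matrix I I ℂ) :=
  borel _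

instance matrixBorelSpace (I : Type*) : BorelSpace (Matrix I I ℂ) := ⟨rfl⟩

/-- The Haar random state `ψ = U e₁`: the column of the unitary `U` at the fixed
standard basis index `default`. -/
def haarState {I : Type*} [DecidableEq I] [Fintype I] [Inhabited I]
    (U : Matrix.unitaryGroup I ℂ) : I → ℂ :=
  fun i => U.1 i default

/-- Reduced density matrix on the first two tensor factors of a tripartite vector:
`ρ_AB[(a,b),(a',b')] = ∑_c ψ(a,b,c) conj (ψ(a',b',c))`. -/
def rhoAB {IA IB IC : Type*} [Fintype IC] (ψ : IA × IB × IC → ℂ) :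
    Matrix (IA × IB) (IA × IB) ℂ :=
  Matrix.of fun p q => ∑ x : IC, ψ (p.1, p.2, x) * (starRingEnd ℂ) (ψ (q.1, q.2, x))

/-- The projector `Π₁` onto one EPR pair between the first qubit of `A` and the
first qubit of `B`, tensored with the identity on all remaining qubits. -/
def eprProjOne (nA nB : ℕ) (hA : 0 < nA) (hB : 0 < nB) :
    Matrix (QubitIdx nA × QubitIdx nB) (QubitIdx nA × QubitIdx nB) ℂ :=
  Matrix.of fun p q =>
    if p.1 ⟨0, hA⟩ = p.2 ⟨0, hB⟩ ∧ q.1 ⟨0, hA⟩ = q.2 ⟨0, hB⟩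
        ∧ (∀ k : Fin nA, 1 ≤ (k : ℕ) → p.1 k = q.1 k)
        ∧ (∀ k : Fin nB, 1 ≤ (k : ℕ) → p.2 k = q.2 k)
    then (2 : ℂ)⁻¹ else 0

/-!
The standard Gaussian measure on `ℂ^d` is unitarily invariant and its direction is a Haar random
state `ψ`, so the probability that `ψ` lies in a cone is a Gaussian integral. For a projector `P` of
relative rank `r ^ 2 < t`, exponential tilting of that integral bounds the probability of
`⟨ψ|P|ψ⟩ ≥ t` by `exp (-(t - r ^ 2) ^ 2 d / 2)`. Since `V ↦ ‖P V ψ‖` is `1`-Lipschitz in operator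
norm, the existential over local unitaries may be restricted to an `ε`-net of `U(d_A) × U(d_B)`, at
the cost of replacing `h` by `h - 2 ε`. Volume comparison gives a net of size
`exp (O(d_A ^ 2 + d_B ^ 2))`, and left invariance makes all terms of the union bound equal. The EPR
projector has relative rank `1 / 4 < h ^ 2`.
-/

/-! ### Gaussian integrals and Haar random states -/

section Haar

variable {I : Type*} [Fintype I]

theorem lintegral_exp_neg_sum_mul_sq {a : I → ℝ} (ha : ∀ i, 0 < a i) :
    ∫⁻ x : I → ℂ, ENNReal.ofReal (Real.exp (-∑ i, a i * ‖x i‖ ^ 2)) =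
      ENNReal.ofReal (∏ i, Real.pi / a i) := by
  have hexp (x : I → ℂ) :
      Real.exp (-∑ i, a i * ‖x i‖ ^ 2) = ∏ i, Real.exp (-a i * ‖x i‖ ^ 2) := by
    simp only [← Real.exp_sum, ← Finset.sum_neg_distrib, neg_mul]
  have hintegral (i : I) : ∫ z : ℂ, Real.exp (-a i * ‖z‖ ^ 2) = Real.pi / a i := by
    simpa [Complex.finrank_real_complex] using
      GaussianFourier.integral_rexp_neg_mul_sq_norm (V := ℂ) (ha i)
  have hintegrable (i : I) : Integrable fun z : ℂ => Real.exp (-a i * ‖z‖ ^ 2) :=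
    .of_integral_ne_zero (hintegral i ▸ (div_pos Real.pi_pos (ha i)).ne')
  have hprod : Integrable fun x : I → ℂ => ∏ i, Real.exp (-a i * ‖x i‖ ^ 2) :=
    .fintype_prod hintegrable
  simp_rw [hexp]
  rw [← ofReal_integral_eq_lintegral_ofReal hprod
    (.of_forall fun _ => by positivity),
    integral_fintype_prod_volume_eq_prod fun i (z : ℂ) => Real.exp (-a i * ‖z‖ ^ 2)]
  simp_rw [hintegral]

variable [DecidableEq I]

theorem sum_norm_sq_unitary_mulVec (U : unitaryGroup I ℂ) (x : I → ℂ) :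
    ∑ i, ‖(U.1 *ᵥ x) i‖ ^ 2 = ∑ i, ‖x i‖ ^ 2 := by
  have hself (y : I → ℂ) : ((∑ i, ‖y i‖ ^ 2 : ℝ) : ℂ) = star y ⬝ᵥ y := by
    simp [dotProduct, Complex.conj_mul']
  have hU : star (U.1 *ᵥ x) ⬝ᵥ (U.1 *ᵥ x) = star x ⬝ᵥ x := by
    rw [star_mulVec, ← dotProduct_mulVec, mulVec_mulVec, ← star_eq_conjTranspose,
      UnitaryGroup.star_mul_self, one_mulVec]
  rw [← hself, ← hself] at hU
  exact_mod_cast hU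

theorem measurePreserving_unitary_mulVec (U : unitaryGroup I ℂ) :
    MeasurePreserving (fun x : I → ℂ => U.1 *ᵥ x) := by
  have hdet : LinearMap.det ((toLin' U.1).restrictScalars ℝ) = 1 := by
    rw [LinearMap.det_restrictScalars, LinearMap.det_toLin', Algebra.norm_complex_apply]
    have hunit : star U.1.det * U.1.det = 1 :=
      Unitary.star_mul_self_of_mem (det_of_mem_unitary U.2)
    rw [Complex.star_def, ← Complex.normSq_eq_conj_mul_self] at hunit
    exact_mod_cast hunit
  refine ⟨(Continuous.matrix_mulVec continuous_const continuous_id).measurable, ?_⟩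
  have hmap : Measure.map (toLin' U.1) (volume : Measure (I → ℂ)) = volume := by
    simpa [hdet] using Measure.map_linearMap_addHaar_eq_smul_addHaar volume
      (f := (toLin' U.1).restrictScalars ℝ) (hdet ▸ one_ne_zero)
  exact hmap

instance compactSpace_unitaryGroup : CompactSpace (unitaryGroup I ℂ) := by
  refine isCompact_iff_compactSpace.1 <|
    (isCompact_univ_pi fun _ : I => isCompact_univ_pi fun _ : I =>
      isCompact_closedBall (0 : ℂ) 1).of_isClosed_subset (isClosed_unitary (R := Matrix I I ℂ)) ?_
  intro U hU i _ j _
  simpa using entry_norm_bound_of_unitary hU i j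

instance secondCountableTopology_unitaryGroup : SecondCountableTopology (unitaryGroup I ℂ) :=
  have : SecondCountableTopology (Matrix I I ℂ) :=
    inferInstanceAs (SecondCountableTopology (I → I → ℂ))
  TopologicalSpace.Subtype.secondCountableTopology _

theorem map_mul_right_unitaryGroup (μ : Measure (unitaryGroup I ℂ)) [μ.IsHaarMeasure]
    [IsProbabilityMeasure μ] (V : unitaryGroup I ℂ) : μ.map (· * V) = μ :=
  have : IsProbabilityMeasure (μ.map (· * V)) :=
    Measure.isProbabilityMeasure_map (continuous_mul_const V).aemeasurable
  Measure.isHaarMeasure_eq_of_isProbabilityMeasure _ _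

theorem lintegral_lintegral_unitary_mulVec (μ : Measure (unitaryGroup I ℂ))
    [IsProbabilityMeasure μ] {F : (I → ℂ) → ENNReal} (hF : Measurable F) :
    ∫⁻ x, ∫⁻ U, F (U.1 *ᵥ x) ∂μ = ∫⁻ x, F x := by
  have hcont : Continuous fun z : (I → ℂ) × unitaryGroup I ℂ => z.2.1 *ᵥ z.1 :=
    (continuous_subtype_val.comp continuous_snd).matrix_mulVec continuous_fst
  rw [lintegral_lintegral_swap (f := fun x (U : unitaryGroup I ℂ) => F (U.1 *ᵥ x))
    (hF.comp hcont.measurable).aemeasurable]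
  simp_rw [(measurePreserving_unitary_mulVec _).lintegral_comp hF]
  simp

variable [Inhabited I]

theorem haarState_mul (V U : unitaryGroup I ℂ) :
    haarState (V * U) = V.1 *ᵥ haarState U := by
  ext i
  simp [haarState, mulVec, dotProduct, mul_apply]

theorem sum_norm_sq_haarState (U : unitaryGroup I ℂ) : ∑ i, ‖haarState U i‖ ^ 2 = 1 := by
  have hcol : haarState U = U.1 *ᵥ Pi.single default 1 := by
    ext i
    simp [haarState]
  rw [hcol, sum_norm_sq_unitary_mulVec, Finset.sum_eq_single default]
  · simp
  · intro j _ hj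
    simp [hj]
  · simp

theorem continuous_haarState : Continuous (haarState : unitaryGroup I ℂ → I → ℂ) :=
  continuous_pi fun i => continuous_subtype_val.matrix_elem i default

theorem exists_haarState_eq {v : I → ℂ} (hv : ∑ i, ‖v i‖ ^ 2 = 1) :
    ∃ V : unitaryGroup I ℂ, haarState V = v := by
  let w : I → EuclideanSpace ℂ I := fun _ => WithLp.toLp 2 v
  have hw : Orthonormal ℂ (({default} : Set I).domRestrict w) :=
    ⟨fun i => by simp [w, EuclideanSpace.norm_eq, hv],
      fun i j hij => absurd (Subsingleton.elim i j) hij⟩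
  obtain ⟨b, hb⟩ := hw.exists_orthonormalBasis_extension_of_card_eq (by simp)
  refine ⟨⟨(EuclideanSpace.basisFun I ℂ).toBasis.toMatrix b,
    OrthonormalBasis.toMatrix_orthonormalBasis_mem_unitary _ _⟩, ?_⟩
  ext i
  simp [haarState, Module.Basis.toMatrix_apply, hb default rfl, w]

theorem exists_unitary_mulVec_eq_smul_haarState {x : I → ℂ} (hx : x ≠ 0) :
    ∃ r : ℝ, 0 < r ∧ ∃ V : unitaryGroup I ℂ,
      ∀ U : unitaryGroup I ℂ, U.1 *ᵥ x = r • haarState (U * V) := by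
  obtain ⟨r, hr, hrx⟩ : ∃ r : ℝ, 0 < r ∧ ∑ i, ‖x i‖ ^ 2 = r ^ 2 :=
    ⟨‖WithLp.toLp 2 x‖, norm_pos_iff.2 (by simpa using hx), (EuclideanSpace.norm_sq_eq _).symm⟩
  obtain ⟨V, hV⟩ := exists_haarState_eq (v := r⁻¹ • x) <| by
    simp only [Pi.smul_apply, norm_smul, norm_inv, Real.norm_of_nonneg hr.le, mul_pow,
      ← Finset.mul_sum, hrx]
    field_simp
  refine ⟨r, hr, V, fun U => ?_⟩
  rw [haarState_mul, hV, mulVec_smul, smul_inv_smul₀ hr.ne']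

/-- The direction of a standard complex Gaussian vector is a Haar random state, and membership in a
cone depends only on the direction. -/
theorem measure_haarState_mem_cone (μ : Measure (unitaryGroup I ℂ)) [μ.IsHaarMeasure]
    [IsProbabilityMeasure μ] {S : Set (I → ℂ)} (hS : MeasurableSet S)
    (hcone : ∀ r : ℝ, 0 < r → ∀ x, r • x ∈ S ↔ x ∈ S) :
    μ {U | haarState U ∈ S} * ENNReal.ofReal (Real.pi ^ Fintype.card I) =
      ∫⁻ x in S, ENNReal.ofReal (Real.exp (-∑ i, ‖x i‖ ^ 2)) := by
  let gauss (x : I → ℂ) : ENNReal := ENNReal.ofReal (Real.exp (-∑ i, ‖x i‖ ^ 2))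
  have hgauss : Measurable gauss := by fun_prop
  have hinvariant {x : I → ℂ} (hx : x ≠ 0) :
      μ {U | U.1 *ᵥ x ∈ S} = μ {U | haarState U ∈ S} := by
    obtain ⟨r, hr, V, hV⟩ := exists_unitary_mulVec_eq_smul_haarState hx
    have hSm : MeasurableSet {U : unitaryGroup I ℂ | haarState U ∈ S} :=
      continuous_haarState.measurable hS
    simp_rw [hV, hcone r hr]
    conv_rhs => rw [← map_mul_right_unitaryGroup μ V,
      Measure.map_apply (continuous_mul_const V).measurable hSm]
    rfl
  have hfiber {x : I → ℂ} (hx : x ≠ 0) :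
      ∫⁻ U, S.indicator gauss (U.1 *ᵥ x) ∂μ = μ {U | haarState U ∈ S} * gauss x := by
    have hSx : MeasurableSet {U : unitaryGroup I ℂ | U.1 *ᵥ x ∈ S} :=
      (continuous_subtype_val.matrix_mulVec continuous_const).measurable hS
    rw [← hinvariant hx, mul_comm, ← lintegral_indicator_const hSx]
    simp only [Set.indicator, Set.mem_ofPred_eq, gauss, sum_norm_sq_unitary_mulVec]
  calc μ {U | haarState U ∈ S} * ENNReal.ofReal (Real.pi ^ Fintype.card I)
      = ∫⁻ x, μ {U | haarState U ∈ S} * gauss x := by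
        have hmass := lintegral_exp_neg_sum_mul_sq (I := I) (a := 1) fun _ => one_pos
        simp only [Pi.one_apply, one_mul, div_one, Finset.prod_const, Finset.card_univ] at hmass
        rw [lintegral_const_mul _ hgauss, hmass]
    _ = ∫⁻ x, ∫⁻ U, S.indicator gauss (U.1 *ᵥ x) ∂μ := by
        have hne : ∀ᵐ x : I → ℂ, x ≠ 0 := by simp [ae_iff, measure_singleton]
        exact lintegral_congr_ae (hne.mono fun x hx => (hfiber hx).symm)
    _ = ∫⁻ x in S, gauss x := by
        rw [lintegral_lintegral_unitary_mulVec μ (hgauss.indicator hS), lintegral_indicator hS]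

end Haar

/-! ### A Chernoff bound for projectors -/

theorem one_sub_tilt_pos {s t l : ℝ} (hs : 0 ≤ s) (hst : s ≤ t) (ht : t ≤ 1)
    (hl : l = 0 ∨ l = 1) : 0 < 1 - s * (l - t) := by
  rcases hl with rfl | rfl
  · nlinarith
  · nlinarith [sq_nonneg (t - 1 / 2)]

/-- With the tilt `s = t - r`, a `{0, 1}`-valued observable of mean `r` exceeds `t` at the
exponential rate `s ^ 2 / 2` per dimension. -/
theorem bernoulli_tilt_le {r t : ℝ} (hr : 0 ≤ r) (hrt : r ≤ t) (ht : t ≤ 1) :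
    r * (1 - (t - r) * (1 - t))⁻¹ + (1 - r) * (1 - (t - r) * (0 - t))⁻¹ - 1 ≤
      -((t - r) ^ 2 / 2) := by
  obtain ⟨s, hs⟩ : ∃ s, s = t - r := ⟨_, rfl⟩
  obtain rfl : r = t - s := by linarith
  rw [sub_nonneg] at hr
  rw [sub_sub_cancel]
  have hs0 : 0 ≤ s := sub_le_self_iff t |>.1 hrt
  have hone : 0 < 1 - s * (1 - t) := one_sub_tilt_pos hs0 hr ht (.inr rfl)
  have hzero : 0 < 1 - s * (0 - t) := one_sub_tilt_pos hs0 hr ht (.inl rfl)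
  have hgap : (t - s) * (1 - s * (1 - t))⁻¹ + (1 - (t - s)) * (1 - s * (0 - t))⁻¹ - 1 =
      -(s ^ 2 * ((1 - t + t ^ 2) / ((1 - s * (1 - t)) * (1 - s * (0 - t))))) := by
    field_simp
    ring
  have hratio : 1 / 2 ≤ (1 - t + t ^ 2) / ((1 - s * (1 - t)) * (1 - s * (0 - t))) := by
    rw [div_le_div_iff₀ two_pos (mul_pos hone hzero)]
    have hquad : s * (2 * t - 1) ≤ 1 - 2 * t + 2 * t ^ 2 := by
      rcases le_total (2 * t) 1 with _ | _ <;> nlinarith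
    have hcross : 0 ≤ s ^ 2 * (t * (1 - t)) :=
      mul_nonneg (sq_nonneg s) (mul_nonneg (hs0.trans hr) (sub_nonneg.2 ht))
    linarith
  rw [hgap, neg_le_neg_iff, div_eq_mul_one_div]
  exact mul_le_mul_of_nonneg_left hratio (sq_nonneg s)

theorem prod_inv_one_sub_tilt_le_exp {I : Type*} [Fintype I] {l : I → ℝ} {r t : ℝ} (hr : 0 ≤ r)
    (hrt : r ≤ t) (ht : t ≤ 1) (hl : ∀ i, l i = 0 ∨ l i = 1)
    (hsum : ∑ i, l i ≤ r * Fintype.card I) :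
    ∏ i, (1 - (t - r) * (l i - t))⁻¹ ≤ Real.exp (-((t - r) ^ 2 / 2 * Fintype.card I)) := by
  have hpos {x : ℝ} (hx : x = 0 ∨ x = 1) : 0 < 1 - (t - r) * (x - t) :=
    one_sub_tilt_pos (sub_nonneg.2 hrt) (sub_le_self t hr) ht hx
  let a₁ := (1 - (t - r) * (1 - t))⁻¹
  let a₀ := (1 - (t - r) * (0 - t))⁻¹
  have ha : a₀ ≤ a₁ := inv_anti₀ (hpos (.inr rfl)) (by linarith)
  have hinterp (i : I) : (1 - (t - r) * (l i - t))⁻¹ = l i * (a₁ - a₀) + a₀ := by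
    rcases hl i with h | h <;> simp only [h, a₁, a₀] <;> ring
  calc ∏ i, (1 - (t - r) * (l i - t))⁻¹
      ≤ ∏ i, Real.exp ((1 - (t - r) * (l i - t))⁻¹ - 1) :=
        Finset.prod_le_prod (fun i _ => (inv_pos.2 (hpos (hl i))).le) fun i _ => by
          simpa using Real.add_one_le_exp ((1 - (t - r) * (l i - t))⁻¹ - 1)
    _ = Real.exp ((∑ i, l i) * (a₁ - a₀) + Fintype.card I * (a₀ - 1)) := by
        simp only [← Real.exp_sum, hinterp, Finset.sum_sub_distrib, Finset.sum_add_distrib,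
          ← Finset.sum_mul, Finset.sum_const, Finset.card_univ, nsmul_eq_mul]
        ring_nf
    _ ≤ Real.exp (-((t - r) ^ 2 / 2 * Fintype.card I)) := by
        have hmean := mul_le_mul_of_nonneg_right hsum (sub_nonneg.2 ha)
        have htilt := mul_le_mul_of_nonneg_right (bernoulli_tilt_le hr hrt ht)
          (Nat.cast_nonneg (α := ℝ) (Fintype.card I))
        rw [Real.exp_le_exp]
        linarith

section Tail

variable {I : Type*} [Fintype I] [DecidableEq I] [Inhabited I]
  (μ : Measure (unitaryGroup I ℂ)) [μ.IsHaarMeasure] [IsProbabilityMeasure μ]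

theorem measure_sum_mul_norm_sq_haarState_nonneg_le {b : I → ℝ} (hb : ∀ i, b i < 1) :
    μ {U | 0 ≤ ∑ i, b i * ‖haarState U i‖ ^ 2} ≤ ENNReal.ofReal (∏ i, (1 - b i)⁻¹) := by
  let S : Set (I → ℂ) := {x | 0 ≤ ∑ i, b i * ‖x i‖ ^ 2}
  have hS : MeasurableSet S :=
    (isClosed_le continuous_const (by fun_prop : Continuous _)).measurableSet
  have hcone (r : ℝ) (hr : 0 < r) (x : I → ℂ) : r • x ∈ S ↔ x ∈ S := by
    have hscale : ∑ i, b i * ‖(r • x) i‖ ^ 2 = r ^ 2 * ∑ i, b i * ‖x i‖ ^ 2 := by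
      simp only [Pi.smul_apply, norm_smul, mul_pow, Real.norm_eq_abs, sq_abs, Finset.mul_sum]
      exact Finset.sum_congr rfl fun i _ => by ring
    simp only [S, Set.mem_ofPred_eq, hscale, mul_nonneg_iff_of_pos_left (pow_pos hr 2)]
  have htilt : ∀ x ∈ S, Real.exp (-∑ i, ‖x i‖ ^ 2) ≤ Real.exp (-∑ i, (1 - b i) * ‖x i‖ ^ 2) := by
    intro x (hx : 0 ≤ ∑ i, b i * ‖x i‖ ^ 2)
    simp only [sub_mul, one_mul, Finset.sum_sub_distrib, Real.exp_le_exp]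
    linarith
  have hpi : 0 < Real.pi ^ Fintype.card I := pow_pos Real.pi_pos _
  refine (ENNReal.mul_le_mul_iff_left (ENNReal.ofReal_pos.2 hpi).ne' ENNReal.ofReal_ne_top).1 ?_
  calc μ {U | haarState U ∈ S} * ENNReal.ofReal (Real.pi ^ Fintype.card I)
      = ∫⁻ x in S, ENNReal.ofReal (Real.exp (-∑ i, ‖x i‖ ^ 2)) :=
        measure_haarState_mem_cone μ hS hcone
    _ ≤ ∫⁻ x in S, ENNReal.ofReal (Real.exp (-∑ i, (1 - b i) * ‖x i‖ ^ 2)) :=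
        setLIntegral_mono' hS fun x hx => ENNReal.ofReal_le_ofReal (htilt x hx)
    _ ≤ ∫⁻ x : I → ℂ, ENNReal.ofReal (Real.exp (-∑ i, (1 - b i) * ‖x i‖ ^ 2)) :=
        setLIntegral_le_lintegral _ _
    _ = ENNReal.ofReal (∏ i, Real.pi / (1 - b i)) :=
        lintegral_exp_neg_sum_mul_sq fun i => sub_pos.2 (hb i)
    _ = ENNReal.ofReal (∏ i, (1 - b i)⁻¹) * ENNReal.ofReal (Real.pi ^ Fintype.card I) := by
        rw [← ENNReal.ofReal_mul' hpi.le]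
        simp only [div_eq_inv_mul, Finset.prod_mul_distrib, Finset.prod_const, Finset.card_univ]

omit [Inhabited I] in
theorem re_dotProduct_mulVec_eq_sum_eigenvalues {H : Matrix I I ℂ} (hH : H.IsHermitian)
    (x : I → ℂ) :
    (star x ⬝ᵥ H *ᵥ x).re =
      ∑ i, hH.eigenvalues i * ‖((star hH.eigenvectorUnitary).1 *ᵥ x) i‖ ^ 2 := by
  let D : Matrix I I ℂ := diagonal fun i => (hH.eigenvalues i : ℂ)
  let y : I → ℂ := (hH.eigenvectorUnitary.1)ᴴ *ᵥ x
  have hspec : H = hH.eigenvectorUnitary.1 * D * (hH.eigenvectorUnitary.1)ᴴ := by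
    conv_lhs => rw [hH.spectral_theorem, Unitary.conjStarAlgAut_apply]
    rfl
  have hdiag : star x ⬝ᵥ H *ᵥ x = star y ⬝ᵥ D *ᵥ y := by
    rw [star_mulVec, conjTranspose_conjTranspose, ← dotProduct_mulVec, mulVec_mulVec,
      mulVec_mulVec, ← hspec]
  calc (star x ⬝ᵥ H *ᵥ x).re = ∑ i, (star (y i) * (hH.eigenvalues i * y i)).re := by
        rw [hdiag]
        simp only [D, dotProduct, mulVec_diagonal, Complex.re_sum, Pi.star_apply]
    _ = ∑ i, hH.eigenvalues i * ‖y i‖ ^ 2 := by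
        refine Finset.sum_congr rfl fun i _ => ?_
        rw [mul_left_comm, Complex.star_def, Complex.conj_mul', Complex.re_ofReal_mul]
        norm_cast

theorem measure_le_re_dotProduct_haarState_le {H : Matrix I I ℂ} (hH : H.IsHermitian) {s t : ℝ}
    (hs : 0 ≤ s) (hst : ∀ i, s * (hH.eigenvalues i - t) < 1) :
    μ {U | t ≤ (star (haarState U) ⬝ᵥ H *ᵥ haarState U).re} ≤
      ENNReal.ofReal (∏ i, (1 - s * (hH.eigenvalues i - t))⁻¹) := by
  let W : unitaryGroup I ℂ := star hH.eigenvectorUnitary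
  have hsub : {U | t ≤ (star (haarState U) ⬝ᵥ H *ᵥ haarState U).re} ⊆
      (W * ·) ⁻¹' {U | 0 ≤ ∑ i, s * (hH.eigenvalues i - t) * ‖haarState U i‖ ^ 2} := by
    intro U (hU : t ≤ _)
    rw [re_dotProduct_mulVec_eq_sum_eigenvalues hH, ← haarState_mul] at hU
    have hexcess : ∑ i, s * (hH.eigenvalues i - t) * ‖haarState (W * U) i‖ ^ 2 =
        s * (∑ i, hH.eigenvalues i * ‖haarState (W * U) i‖ ^ 2 - t) := by
      simp only [mul_assoc, sub_mul, ← Finset.mul_sum, Finset.sum_sub_distrib,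
        sum_norm_sq_haarState, mul_one]
    exact (mul_nonneg hs (sub_nonneg.2 hU)).trans_eq hexcess.symm
  calc _ ≤ _ := measure_mono hsub
    _ = _ := measure_preimage_mul μ W _
    _ ≤ _ := measure_sum_mul_norm_sq_haarState_nonneg_le μ hst

omit [Inhabited I] in
theorem eigenvalues_eq_zero_or_one_of_isStarProjection {P : Matrix I I ℂ}
    (hP : IsStarProjection P) (hPH : P.IsHermitian) (i : I) :
    hPH.eigenvalues i = 0 ∨ hPH.eigenvalues i = 1 := by
  simpa using hP.isIdempotentElem.spectrum_subset ℝ (hPH.eigenvalues_mem_spectrum_real i)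

theorem measure_le_re_dotProduct_isStarProjection_le {P : Matrix I I ℂ} (hP : IsStarProjection P)
    {r t : ℝ} (hr : P.trace.re ≤ r * Fintype.card I) (hrt : r ≤ t) (ht : t ≤ 1) :
    μ {U | t ≤ (star (haarState U) ⬝ᵥ P *ᵥ haarState U).re} ≤
      ENNReal.ofReal (Real.exp (-((t - r) ^ 2 / 2 * Fintype.card I))) := by
  have hPH : P.IsHermitian := hP.isSelfAdjoint
  have hl := eigenvalues_eq_zero_or_one_of_isStarProjection hP hPH
  have htrace : ∑ i, hPH.eigenvalues i ≤ r * Fintype.card I := by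
    simpa [hPH.trace_eq_sum_eigenvalues] using hr
  have hr0 : 0 ≤ r := by
    have hsum : 0 ≤ ∑ i, hPH.eigenvalues i :=
      Finset.sum_nonneg fun i _ => by rcases hl i with h | h <;> simp [h]
    exact nonneg_of_mul_nonneg_left (hsum.trans htrace) (by exact_mod_cast Fintype.card_pos)
  have hs : 0 ≤ t - r := sub_nonneg.2 hrt
  exact (measure_le_re_dotProduct_haarState_le μ hPH hs fun i =>
    sub_pos.1 (one_sub_tilt_pos hs (sub_le_self t hr0) ht (hl i))).trans
    (ENNReal.ofReal_le_ofReal (prod_inv_one_sub_tilt_le_exp hr0 hrt ht hl htrace))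

end Tail

/-! ### Operator norms and nets of unitaries -/

section Norm

section Kronecker

variable {R l m n p : Type*} [NonUnitalNonAssocRing R]

theorem sub_kronecker (X X' : Matrix l m R) (Y : Matrix n p R) :
    (X - X') ⊗ₖ Y = X ⊗ₖ Y - X' ⊗ₖ Y := by
  ext
  exact sub_mul _ _ _

theorem kronecker_sub (X : Matrix l m R) (Y Y' : Matrix n p R) :
    X ⊗ₖ (Y - Y') = X ⊗ₖ Y - X ⊗ₖ Y' := by
  ext
  exact mul_sub _ _ _

end Kronecker

open scoped Matrix.Norms.L2Operator

variable {A B : Type*} [Fintype A] [DecidableEq A] [Fintype B] [DecidableEq B]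

theorem l2_opNorm_kronecker_one_le (X : Matrix A A ℂ) : ‖X ⊗ₖ (1 : Matrix B B ℂ)‖ ≤ ‖X‖ := by
  let φ : Matrix A A ℂ →⋆ₙₐ[ℂ] Matrix (A × B) (A × B) ℂ :=
    { toFun := (· ⊗ₖ 1)
      map_smul' := fun c X => smul_kronecker c X 1
      map_zero' := zero_kronecker _
      map_add' := fun X Y => add_kronecker X Y _
      map_mul' := fun X Y => by rw [← mul_kronecker_mul, mul_one]
      map_star' := fun X => by
        simp only [star_eq_conjTranspose, conjTranspose_kronecker, conjTranspose_one] }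
  exact NonUnitalStarAlgHom.norm_apply_le φ X

theorem l2_opNorm_one_kronecker_le (Y : Matrix B B ℂ) : ‖(1 : Matrix A A ℂ) ⊗ₖ Y‖ ≤ ‖Y‖ := by
  let φ : Matrix B B ℂ →⋆ₙₐ[ℂ] Matrix (A × B) (A × B) ℂ :=
    { toFun := (1 ⊗ₖ ·)
      map_smul' := fun c Y => kronecker_smul c 1 Y
      map_zero' := kronecker_zero _
      map_add' := kronecker_add _
      map_mul' := fun X Y => by rw [← mul_kronecker_mul, mul_one]
      map_star' := fun Y => by
        simp only [star_eq_conjTranspose, conjTranspose_kronecker, conjTranspose_one] }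
  exact NonUnitalStarAlgHom.norm_apply_le φ Y

theorem l2_opNorm_kronecker_le (X : Matrix A A ℂ) (Y : Matrix B B ℂ) :
    ‖X ⊗ₖ Y‖ ≤ ‖X‖ * ‖Y‖ :=
  calc ‖X ⊗ₖ Y‖ = ‖(X ⊗ₖ 1) * (1 ⊗ₖ Y)‖ := by rw [← mul_kronecker_mul, mul_one, one_mul]
    _ ≤ ‖X ⊗ₖ (1 : Matrix B B ℂ)‖ * ‖(1 : Matrix A A ℂ) ⊗ₖ Y‖ := norm_mul_le _ _
    _ ≤ ‖X‖ * ‖Y‖ := by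
      gcongr
      exacts [l2_opNorm_kronecker_one_le X, l2_opNorm_one_kronecker_le Y]

theorem l2_opNorm_kronecker_sub_kronecker_le (X X' : Matrix A A ℂ) (Y Y' : Matrix B B ℂ) :
    ‖X ⊗ₖ Y - X' ⊗ₖ Y'‖ ≤ ‖X - X'‖ * ‖Y‖ + ‖X'‖ * ‖Y - Y'‖ := by
  have htelescope : X ⊗ₖ Y - X' ⊗ₖ Y' = (X - X') ⊗ₖ Y + X' ⊗ₖ (Y - Y') := by
    rw [sub_kronecker, kronecker_sub, sub_add_sub_cancel]
  rw [htelescope]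
  exact norm_add_le_of_le (l2_opNorm_kronecker_le _ _) (l2_opNorm_kronecker_le _ _)

theorem l2_opNorm_le_one_of_mem_unitary {U : Matrix A A ℂ} (hU : U ∈ unitaryGroup A ℂ) :
    ‖U‖ ≤ 1 := by
  rcases subsingleton_or_nontrivial (Matrix A A ℂ) with _ | _
  · simp [Subsingleton.elim U 0]
  · exact (CStarRing.norm_of_mem_unitary hU).le

omit [DecidableEq A] in
theorem re_dotProduct_mulVec_eq_norm_sq {P : Matrix A A ℂ} (hP : IsStarProjection P) (x : A → ℂ) :
    (star x ⬝ᵥ P *ᵥ x).re = ‖WithLp.toLp 2 (P *ᵥ x)‖ ^ 2 := by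
  have hself : star x ⬝ᵥ P *ᵥ x = star (P *ᵥ x) ⬝ᵥ (P *ᵥ x) := by
    rw [star_mulVec, ← star_eq_conjTranspose, hP.isSelfAdjoint.star_eq, ← dotProduct_mulVec,
      mulVec_mulVec, hP.isIdempotentElem.eq]
  rw [hself, EuclideanSpace.norm_sq_eq]
  simp only [dotProduct, Complex.re_sum, Pi.star_apply, Complex.star_def, Complex.conj_mul']
  norm_cast

theorem norm_mulVec_le_add_of_isStarProjection {P : Matrix A A ℂ} (hP : IsStarProjection P)
    (V W : Matrix A A ℂ) (x : A → ℂ) :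
    ‖WithLp.toLp 2 (P *ᵥ (V *ᵥ x))‖ ≤
      ‖WithLp.toLp 2 (P *ᵥ (W *ᵥ x))‖ + ‖V - W‖ * ‖WithLp.toLp 2 x‖ := by
  have hsplit : WithLp.toLp 2 (P *ᵥ (V *ᵥ x)) =
      WithLp.toLp 2 (P *ᵥ (W *ᵥ x)) + WithLp.toLp 2 ((P * (V - W)) *ᵥ x) := by
    rw [← WithLp.toLp_add, mulVec_mulVec, mulVec_mulVec, ← add_mulVec, mul_sub, add_sub_cancel]
  have hdiff : ‖P * (V - W)‖ ≤ ‖V - W‖ :=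
    (norm_mul_le _ _).trans (mul_le_of_le_one_left (norm_nonneg _) hP.norm_le)
  rw [hsplit]
  exact norm_add_le_of_le le_rfl <| (l2_opNorm_mulVec _ (WithLp.toLp 2 x)).trans <|
    mul_le_mul_of_nonneg_right hdiff (norm_nonneg _)

end Norm

section Net

open Metric
open scoped NNReal ENNReal

variable {E : Type*} [NormedAddCommGroup E] [NormedSpace ℝ E] [FiniteDimensional ℝ E]

/-- Volume comparison: the balls of radius `ε / 2` around the points of `C` are disjoint and
contained in the ball of radius `R + ε / 2`. -/
theorem encard_le_of_isSeparated_of_subset_closedBall {ε R : ℝ≥0} (hε : 0 < ε) {x : E}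
    {C : Set E} (hC : C ⊆ closedBall x R) (hsep : IsSeparated ε C) :
    (C.encard : ℝ≥0∞) ≤ ENNReal.ofReal ((1 + 2 * R / ε : ℝ) ^ Module.finrank ℝ E) := by
  borelize E
  let μ : Measure E := Measure.addHaar
  have hε' : (0 : ℝ) < ε := hε
  have hradius : (1 + 2 * R / ε) * (ε / 2) = (ε / 2 + R : ℝ) := by
    field_simp
  have hdisjoint : Pairwise (Function.onFun Disjoint fun c : C => ball (c : E) (ε / 2)) := by
    intro c d hcd
    have hdist : (ε : ℝ≥0∞) < edist (c : E) d := hsep c.2 d.2 (Subtype.coe_injective.ne hcd)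
    rw [edist_nndist, ENNReal.coe_lt_coe, ← NNReal.coe_lt_coe, coe_nndist] at hdist
    exact ball_disjoint_ball (by linarith)
  have hsubset : ⋃ c : C, ball (c : E) (ε / 2) ⊆ ball x ((1 + 2 * R / ε) * (ε / 2)) := by
    refine Set.iUnion_subset fun c => ball_subset_ball' ?_
    rw [hradius]
    gcongr
    exact hC c.2
  have hball : 0 < μ (ball (0 : E) (ε / 2)) := measure_ball_pos μ 0 (half_pos hε')
  refine (ENNReal.mul_le_mul_iff_left hball.ne' measure_ball_lt_top.ne).1 ?_
  calc (C.encard : ℝ≥0∞) * μ (ball 0 (ε / 2)) = ∑' c : C, μ (ball (c : E) (ε / 2)) := by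
        simp only [μ.addHaar_ball_center _ (ε / 2), ENNReal.tsum_set_const]
    _ ≤ μ (⋃ c : C, ball (c : E) (ε / 2)) :=
        tsum_meas_le_meas_iUnion_of_disjoint μ (fun _ => measurableSet_ball) hdisjoint
    _ ≤ μ (ball x ((1 + 2 * R / ε) * (ε / 2))) := measure_mono hsubset
    _ = ENNReal.ofReal ((1 + 2 * R / ε) ^ Module.finrank ℝ E) * μ (ball 0 (ε / 2)) :=
        μ.addHaar_ball_mul_of_pos _ (by positivity) _

theorem exists_finset_net_of_subset_closedBall {ε R : ℝ≥0} (hε : 0 < ε) {x : E} {S : Set E}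
    (hS : S ⊆ closedBall x R) :
    ∃ N : Finset E, ↑N ⊆ S ∧ (N.card : ℝ) ≤ (1 + 2 * R / ε) ^ Module.finrank ℝ E ∧
      ∀ y ∈ S, ∃ z ∈ N, dist y z ≤ ε := by
  have hpacking : (packingNumber ε S : ℝ≥0∞) ≤
      ENNReal.ofReal ((1 + 2 * R / ε : ℝ) ^ Module.finrank ℝ E) := by
    simp only [packingNumber, ENat.toENNReal_iSup, iSup_le_iff]
    exact fun C hCS hsep => encard_le_of_isSeparated_of_subset_closedBall hε (hCS.trans hS) hsep
  have hpacking_ne_top : packingNumber ε S ≠ ⊤ :=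
    ENat.toENNReal_ne_top.1 (ne_top_of_le_ne_top ENNReal.ofReal_ne_top hpacking)
  have hencard := encard_maximalSeparatedSet hpacking_ne_top
  have hfinite : (maximalSeparatedSet ε S).Finite :=
    Set.encard_ne_top_iff.1 (hencard ▸ hpacking_ne_top)
  refine ⟨hfinite.toFinset, by simpa using maximalSeparatedSet_subset, ?_, fun y hy => ?_⟩
  · rw [← hencard, hfinite.encard_eq_coe_toFinset_card, ENat.toENNReal_coe,
      ← ENNReal.ofReal_natCast] at hpacking
    exact (ENNReal.ofReal_le_ofReal_iff (by positivity)).1 hpacking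
  · obtain ⟨z, hz, hyz⟩ := isCover_maximalSeparatedSet hpacking_ne_top hy
    exact ⟨z, by simpa using hz, by simpa [edist_le_coe] using hyz⟩

open scoped Matrix.Norms.L2Operator in
theorem exists_finset_unitary_net (I : Type*) [Fintype I] [DecidableEq I] {ε : ℝ} (hε : 0 < ε) :
    ∃ N : Finset (unitaryGroup I ℂ),
      (N.card : ℝ) ≤ (1 + 2 / ε) ^ (2 * Fintype.card I ^ 2) ∧
      ∀ U : unitaryGroup I ℂ, ∃ V ∈ N, ‖U.1 - V.1‖ ≤ ε := by
  have hfinrank : Module.finrank ℝ (Matrix I I ℂ) = 2 * Fintype.card I ^ 2 := by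
    rw [← Module.finrank_mul_finrank ℝ ℂ (Matrix I I ℂ), Complex.finrank_real_complex,
      Module.finrank_matrix, Module.finrank_self, mul_one, sq]
  have hball : (unitaryGroup I ℂ : Set (Matrix I I ℂ)) ⊆ closedBall 0 (1 : ℝ≥0) := fun U hU => by
    simpa using l2_opNorm_le_one_of_mem_unitary hU
  lift ε to ℝ≥0 using hε.le
  obtain ⟨N, hN, hcard, hnet⟩ := exists_finset_net_of_subset_closedBall hε hball
  lift N to Finset (unitaryGroup I ℂ) using hN
  rw [Finset.card_image_of_injective _ Subtype.val_injective, hfinrank] at hcard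
  refine ⟨N, by simpa using hcard, fun U => ?_⟩
  obtain ⟨_, hV, hUV⟩ := hnet U U.2
  obtain ⟨V, hVN, rfl⟩ := Finset.mem_image.1 hV
  exact ⟨V, hVN, by simpa [dist_eq_norm] using hUV⟩

end Net

/-! ### Tripartite states and local unitaries -/

section Tripartite

variable {A B C : Type*} [Fintype A] [Fintype B] [Fintype C]

theorem isStarProjection_kronecker {R : Type*} [CommSemiring R] [StarRing R] {P : Matrix A A R}
    {Q : Matrix B B R} (hP : IsStarProjection P) (hQ : IsStarProjection Q) :
    IsStarProjection (P ⊗ₖ Q) where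
  isIdempotentElem := by
    rw [IsIdempotentElem, ← mul_kronecker_mul, hP.isIdempotentElem.eq, hQ.isIdempotentElem.eq]
  isSelfAdjoint := by
    rw [isSelfAdjoint_iff, star_eq_conjTranspose, conjTranspose_kronecker,
      ← star_eq_conjTranspose, ← star_eq_conjTranspose, hP.isSelfAdjoint.star_eq,
      hQ.isSelfAdjoint.star_eq]

theorem isStarProjection_submatrix_equiv {R : Type*} [NonUnitalSemiring R] [StarRing R]
    {P : Matrix A A R} (hP : IsStarProjection P) (e : B ≃ A) :
    IsStarProjection (P.submatrix e e) where
  isIdempotentElem := by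
    rw [IsIdempotentElem, submatrix_mul_equiv, hP.isIdempotentElem.eq]
  isSelfAdjoint := by
    rw [isSelfAdjoint_iff, star_eq_conjTranspose, conjTranspose_submatrix,
      ← star_eq_conjTranspose, hP.isSelfAdjoint.star_eq]

theorem trace_submatrix_equiv {R : Type*} [AddCommMonoid R] (M : Matrix A A R) (e : B ≃ A) :
    (M.submatrix e e).trace = M.trace :=
  e.sum_comp fun a => M a a

/-- A tripartite vector as the matrix of a map from the third factor to the first two; the
reduced state `rhoAB` is then a product of this matrix with its adjoint. -/
def stateMatrix {A B C : Type*} (ψ : A × B × C → ℂ) : Matrix (A × B) C ℂ :=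
  of fun p c => ψ (p.1, p.2, c)

omit [Fintype A] [Fintype B] in
theorem rhoAB_eq_stateMatrix_mul_conjTranspose (ψ : A × B × C → ℂ) :
    rhoAB ψ = stateMatrix ψ * (stateMatrix ψ)ᴴ := rfl

theorem star_dotProduct_eq_trace (φ ψ : A × B × C → ℂ) :
    star φ ⬝ᵥ ψ = ((stateMatrix φ)ᴴ * stateMatrix ψ).trace := by
  rw [trace_mul_comm]
  simp [stateMatrix, dotProduct, trace, mul_apply, Fintype.sum_prod_type, mul_comm]

variable [DecidableEq A] [DecidableEq B] [DecidableEq C]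

/-- The local unitary `U_A ⊗ U_B ⊗ 1` on a tripartite space. -/
def localUnitary (C : Type*) [Fintype C] [DecidableEq C] (UA : unitaryGroup A ℂ)
    (UB : unitaryGroup B ℂ) : unitaryGroup (A × B × C) ℂ :=
  ⟨UA.1 ⊗ₖ (UB.1 ⊗ₖ 1), kronecker_mem_unitary UA.2 (kronecker_mem_unitary UB.2 (one_mem _))⟩

/-- The operator `M ⊗ 1` on a tripartite space, for an operator `M` on the first two factors. -/
def tensorId {A B : Type*} (C : Type*) [DecidableEq C] (M : Matrix (A × B) (A × B) ℂ) :
    Matrix (A × B × C) (A × B × C) ℂ :=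
  (M ⊗ₖ (1 : Matrix C C ℂ)).submatrix (Equiv.prodAssoc A B C).symm (Equiv.prodAssoc A B C).symm

omit [DecidableEq A] [DecidableEq B] in
theorem isStarProjection_tensorId {M : Matrix (A × B) (A × B) ℂ} (hM : IsStarProjection M) :
    IsStarProjection (tensorId C M) :=
  isStarProjection_submatrix_equiv (isStarProjection_kronecker hM (.one _)) _

omit [DecidableEq A] [DecidableEq B] in
theorem trace_tensorId (M : Matrix (A × B) (A × B) ℂ) :
    (tensorId C M).trace = M.trace * Fintype.card C := by
  rw [tensorId, trace_submatrix_equiv, trace_kronecker, trace_one]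

theorem stateMatrix_localUnitary_mulVec (UA : unitaryGroup A ℂ) (UB : unitaryGroup B ℂ)
    (ψ : A × B × C → ℂ) :
    stateMatrix ((localUnitary C UA UB).1 *ᵥ ψ) = (UA.1 ⊗ₖ UB.1) * stateMatrix ψ := by
  ext p c
  simp [stateMatrix, localUnitary, mulVec, dotProduct, mul_apply, Fintype.sum_prod_type, one_apply]

omit [DecidableEq A] [DecidableEq B] in
theorem stateMatrix_tensorId_mulVec (M : Matrix (A × B) (A × B) ℂ) (ψ : A × B × C → ℂ) :
    stateMatrix (tensorId C M *ᵥ ψ) = M * stateMatrix ψ := by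
  ext p c
  simp [stateMatrix, tensorId, mulVec, dotProduct, mul_apply, Fintype.sum_prod_type, one_apply]

theorem rhoAB_localUnitary_mulVec (UA : unitaryGroup A ℂ) (UB : unitaryGroup B ℂ)
    (ψ : A × B × C → ℂ) :
    rhoAB ((localUnitary C UA UB).1 *ᵥ ψ) =
      (UA.1 ⊗ₖ UB.1) * rhoAB ψ * (UA.1 ⊗ₖ UB.1)ᴴ := by
  simp only [rhoAB_eq_stateMatrix_mul_conjTranspose, stateMatrix_localUnitary_mulVec,
    conjTranspose_mul, Matrix.mul_assoc]

omit [DecidableEq A] [DecidableEq B] in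
theorem trace_rhoAB_mul (ψ : A × B × C → ℂ) (M : Matrix (A × B) (A × B) ℂ) :
    (rhoAB ψ * M).trace = star ψ ⬝ᵥ tensorId C M *ᵥ ψ := by
  rw [star_dotProduct_eq_trace, stateMatrix_tensorId_mulVec,
    rhoAB_eq_stateMatrix_mul_conjTranspose, Matrix.mul_assoc, trace_mul_comm, Matrix.mul_assoc]

section LocalUnitary

open scoped Matrix.Norms.L2Operator

theorem l2_opNorm_localUnitary_sub_le (UA VA : unitaryGroup A ℂ) (UB VB : unitaryGroup B ℂ) :
    ‖(localUnitary C UA UB).1 - (localUnitary C VA VB).1‖ ≤ ‖UA.1 - VA.1‖ + ‖UB.1 - VB.1‖ := by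
  have hUB : ‖UB.1 ⊗ₖ (1 : Matrix C C ℂ)‖ ≤ 1 :=
    (l2_opNorm_kronecker_one_le _).trans (l2_opNorm_le_one_of_mem_unitary UB.2)
  have hsub : ‖UB.1 ⊗ₖ (1 : Matrix C C ℂ) - VB.1 ⊗ₖ 1‖ ≤ ‖UB.1 - VB.1‖ := by
    rw [← sub_kronecker]
    exact l2_opNorm_kronecker_one_le _
  exact (l2_opNorm_kronecker_sub_kronecker_le _ _ _ _).trans <| add_le_add
    (mul_le_of_le_one_right (norm_nonneg _) hUB)
    ((mul_le_of_le_one_left (norm_nonneg _) (l2_opNorm_le_one_of_mem_unitary VA.2)).trans hsub)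

end LocalUnitary

end Tripartite

/-! ### The EPR projector -/

section EPR

/-- The projector `|EPR₂⟩⟨EPR₂|` onto the two-qubit state `(e₀ ⊗ e₀ + e₁ ⊗ e₁) / √2`. -/
def eprPair : Matrix (Fin 2 × Fin 2) (Fin 2 × Fin 2) ℂ :=
  of fun p q => if p.1 = p.2 ∧ q.1 = q.2 then 2⁻¹ else 0

theorem trace_eprPair : eprPair.trace = 1 := by
  simp [eprPair, trace, Fintype.sum_prod_type]

theorem isStarProjection_eprPair : IsStarProjection eprPair where
  isIdempotentElem := by
    ext p q
    simp only [mul_apply, eprPair, of_apply, Fintype.sum_prod_type, Fin.sum_univ_two]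
    norm_num [ite_and]
    split_ifs <;> norm_num
  isSelfAdjoint := by
    ext p q
    simp [eprPair, apply_ite, and_comm]

/-- Separates the first qubits of `A` and `B` from the remaining qubits. -/
def firstQubitsEquiv (m k : ℕ) :
    QubitIdx (m + 1) × QubitIdx (k + 1) ≃ (Fin 2 × Fin 2) × (QubitIdx m × QubitIdx k) :=
  ((Fin.consEquiv fun _ => Fin 2).symm.prodCongr (Fin.consEquiv fun _ => Fin 2).symm).trans
    (Equiv.prodProdProdComm _ _ _ _)

theorem eprProjOne_succ (m k : ℕ) :
    eprProjOne (m + 1) (k + 1) m.succ_pos k.succ_pos =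
      (eprPair ⊗ₖ 1).submatrix (firstQubitsEquiv m k) (firstQubitsEquiv m k) := by
  ext p q
  rw [eprProjOne, eprPair, submatrix_apply, kroneckerMap_apply, one_apply, of_apply, of_apply,
    ite_zero_mul_ite_zero, mul_one]
  refine if_congr ?_ rfl rfl
  simp [firstQubitsEquiv, Fin.forall_fin_succ, funext_iff, Prod.ext_iff, Fin.tail, and_assoc]

theorem isStarProjection_eprProjOne {nA nB : ℕ} (hA : 0 < nA) (hB : 0 < nB) :
    IsStarProjection (eprProjOne nA nB hA hB) := by
  obtain ⟨m, rfl⟩ := Nat.exists_eq_add_one.2 hA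
  obtain ⟨k, rfl⟩ := Nat.exists_eq_add_one.2 hB
  rw [eprProjOne_succ]
  exact isStarProjection_submatrix_equiv
    (isStarProjection_kronecker isStarProjection_eprPair (.one _)) _

theorem trace_eprProjOne {nA nB : ℕ} (hA : 0 < nA) (hB : 0 < nB) :
    (eprProjOne nA nB hA hB).trace =
      ((1 / 2) ^ 2 * (Fintype.card (QubitIdx nA) * Fintype.card (QubitIdx nB)) : ℝ) := by
  obtain ⟨m, rfl⟩ := Nat.exists_eq_add_one.2 hA
  obtain ⟨k, rfl⟩ := Nat.exists_eq_add_one.2 hB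
  rw [eprProjOne_succ, trace_submatrix_equiv, trace_kronecker, trace_eprPair, trace_one]
  simp only [Fintype.card_prod, Fintype.card_fun, Fintype.card_fin]
  push_cast
  ring

end EPR

/-! ### Union bound over local unitaries -/

section UnionBound

theorem measure_exists_mem_mul_mem_le {G : Type*} [Group G] [MeasurableSpace G] [MeasurableMul G]
    (μ : Measure G) [μ.IsMulLeftInvariant] (N : Finset G) (T : Set G) :
    μ {g | ∃ k ∈ N, k * g ∈ T} ≤ N.card * μ T :=
  calc μ {g | ∃ k ∈ N, k * g ∈ T} = μ (⋃ k ∈ N, (k * ·) ⁻¹' T) := by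
        congr 1
        ext g
        simp
    _ ≤ ∑ k ∈ N, μ ((k * ·) ⁻¹' T) := measure_biUnion_finset_le _ _
    _ = N.card * μ T := by simp [measure_preimage_mul]

open scoped Matrix.Norms.L2Operator

section Perturbation

variable {I : Type*} [Fintype I] [DecidableEq I] [Inhabited I]

theorem sq_sub_le_re_dotProduct_of_norm_sub_le {P : Matrix I I ℂ} (hP : IsStarProjection P)
    {V W : unitaryGroup I ℂ} {δ h : ℝ} (hVW : ‖V.1 - W.1‖ ≤ δ) (hδ : δ ≤ h)
    {U : unitaryGroup I ℂ}
    (hV : h ^ 2 ≤ (star (haarState (V * U)) ⬝ᵥ P *ᵥ haarState (V * U)).re) :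
    (h - δ) ^ 2 ≤ (star (haarState (W * U)) ⬝ᵥ P *ᵥ haarState (W * U)).re := by
  rw [re_dotProduct_mulVec_eq_norm_sq hP, haarState_mul] at hV ⊢
  have hnorm : ‖WithLp.toLp 2 (haarState U)‖ = 1 := by
    rw [EuclideanSpace.norm_eq, Real.sqrt_eq_one]
    exact sum_norm_sq_haarState U
  have hlipschitz := norm_mulVec_le_add_of_isStarProjection hP V.1 W.1 (haarState U)
  have hh := le_of_sq_le_sq hV (norm_nonneg _)
  refine pow_le_pow_left₀ (sub_nonneg.2 hδ) ?_ 2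
  rw [hnorm, mul_one] at hlipschitz
  linarith

theorem measure_exists_mem_re_dotProduct_le (μ : Measure (unitaryGroup I ℂ)) [μ.IsHaarMeasure]
    [IsProbabilityMeasure μ] {P : Matrix I I ℂ} (hP : IsStarProjection P) {r h δ : ℝ}
    (hr : 0 ≤ r) (htrace : P.trace.re ≤ r ^ 2 * Fintype.card I) (hrh : r ≤ h - δ) (hδ : 0 ≤ δ)
    (hh : h ≤ 1) {ι : Type*} {V : ι → unitaryGroup I ℂ} {N : Finset (unitaryGroup I ℂ)}
    (hN : ∀ i, ∃ W ∈ N, ‖(V i).1 - W.1‖ ≤ δ) :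
    μ {U | ∃ i, h ^ 2 ≤ (star (haarState (V i * U)) ⬝ᵥ P *ᵥ haarState (V i * U)).re} ≤
      ENNReal.ofReal
        (N.card * Real.exp (-(((h - δ) ^ 2 - r ^ 2) ^ 2 / 2 * Fintype.card I))) := by
  let T : Set (unitaryGroup I ℂ) :=
    {U | (h - δ) ^ 2 ≤ (star (haarState U) ⬝ᵥ P *ᵥ haarState U).re}
  have htail : μ T ≤
      ENNReal.ofReal (Real.exp (-(((h - δ) ^ 2 - r ^ 2) ^ 2 / 2 * Fintype.card I))) :=
    measure_le_re_dotProduct_isStarProjection_le μ hP htrace (pow_le_pow_left₀ hr hrh 2)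
      (pow_le_one₀ (hr.trans hrh) (by linarith))
  calc _ ≤ μ {U | ∃ W ∈ N, W * U ∈ T} := by
        refine measure_mono fun U => ?_
        rintro ⟨i, hV⟩
        obtain ⟨W, hWN, hVW⟩ := hN i
        exact ⟨W, hWN, sq_sub_le_re_dotProduct_of_norm_sub_le hP hVW (by linarith) hV⟩
    _ ≤ N.card * μ T := measure_exists_mem_mul_mem_le μ N T
    _ ≤ _ := by
        rw [ENNReal.ofReal_mul N.card.cast_nonneg, ENNReal.ofReal_natCast]
        gcongr

end Perturbation

theorem exists_finset_localUnitary_net (A B C : Type*) [Fintype A] [DecidableEq A] [Fintype B]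
    [DecidableEq B] [Fintype C] [DecidableEq C] {ε : ℝ} (hε : 0 < ε) :
    ∃ N : Finset (unitaryGroup (A × B × C) ℂ),
      (N.card : ℝ) ≤ (1 + 2 / ε) ^ (2 * (Fintype.card A ^ 2 + Fintype.card B ^ 2)) ∧
      ∀ UA : unitaryGroup A ℂ, ∀ UB : unitaryGroup B ℂ,
        ∃ V ∈ N, ‖(localUnitary C UA UB).1 - V.1‖ ≤ 2 * ε := by
  obtain ⟨NA, hcardA, hnetA⟩ := exists_finset_unitary_net A hε
  obtain ⟨NB, hcardB, hnetB⟩ := exists_finset_unitary_net B hε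
  refine ⟨Finset.image₂ (localUnitary C) NA NB, ?_, fun UA UB => ?_⟩
  · calc ((Finset.image₂ (localUnitary C) NA NB).card : ℝ) ≤ NA.card * NB.card := by
          exact_mod_cast Finset.card_image₂_le (localUnitary C) NA NB
      _ ≤ (1 + 2 / ε) ^ (2 * Fintype.card A ^ 2) * (1 + 2 / ε) ^ (2 * Fintype.card B ^ 2) := by
          gcongr
      _ = (1 + 2 / ε) ^ (2 * (Fintype.card A ^ 2 + Fintype.card B ^ 2)) := by
          rw [← pow_add, mul_add]
  · obtain ⟨VA, hVA, hA⟩ := hnetA UA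
    obtain ⟨VB, hVB, hB⟩ := hnetB UB
    exact ⟨localUnitary C VA VB, Finset.mem_image₂_of_mem hVA hVB,
      (l2_opNorm_localUnitary_sub_le UA VA UB VB).trans (by linarith)⟩

theorem measure_exists_le_trace_localUnitary_conj_le {A B C : Type*} [Fintype A] [DecidableEq A]
    [Fintype B] [DecidableEq B] [Fintype C] [DecidableEq C] [Inhabited (A × B × C)]
    (μ : Measure (unitaryGroup (A × B × C) ℂ)) [μ.IsHaarMeasure] [IsProbabilityMeasure μ]
    {M : Matrix (A × B) (A × B) ℂ} (hM : IsStarProjection M) {r h ε : ℝ} (hr : 0 ≤ r)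
    (htrace : M.trace.re ≤ r ^ 2 * (Fintype.card A * Fintype.card B)) (hε : 0 < ε)
    (hrh : r ≤ h - 2 * ε) (hh : h ≤ 1) :
    μ {U | ∃ UA : unitaryGroup A ℂ, ∃ UB : unitaryGroup B ℂ,
        h ^ 2 ≤ ((UA.1 ⊗ₖ UB.1) * rhoAB (haarState U) * (UA.1 ⊗ₖ UB.1)ᴴ * M).trace.re} ≤
      ENNReal.ofReal ((1 + 2 / ε) ^ (2 * (Fintype.card A ^ 2 + Fintype.card B ^ 2)) *
        Real.exp (-(((h - 2 * ε) ^ 2 - r ^ 2) ^ 2 / 2 *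
          (Fintype.card A * Fintype.card B * Fintype.card C)))) := by
  obtain ⟨N, hcard, hnet⟩ := exists_finset_localUnitary_net A B C hε
  have hdim : (Fintype.card (A × B × C) : ℝ) =
      Fintype.card A * Fintype.card B * Fintype.card C := by
    simp only [Fintype.card_prod, Nat.cast_mul, mul_assoc]
  have htensor : (tensorId C M).trace.re ≤ r ^ 2 * Fintype.card (A × B × C) := by
    rw [trace_tensorId, ← Complex.ofReal_natCast, Complex.re_mul_ofReal, hdim, ← mul_assoc]
    gcongr
  have hunion := measure_exists_mem_re_dotProduct_le μ (isStarProjection_tensorId hM) hr htensor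
    hrh (by positivity) hh (V := fun z : _ × _ => localUnitary C z.1 z.2) fun z => hnet z.1 z.2
  simp only [Prod.exists, haarState_mul, ← trace_rhoAB_mul, rhoAB_localUnitary_mulVec, hdim]
    at hunion
  exact hunion.trans (by gcongr)

end UnionBound

theorem epr_distillation_exponentially_suppressed_general {r h : ℝ} (hr : 0 ≤ r) (hrh : r < h)
    (hh : h ≤ 1) :
    ∃ α : ℝ, 0 < α ∧ ∃ K : ℝ, 0 < K ∧
      ∀ (A B C : Type*) [Fintype A] [DecidableEq A] [Fintype B] [DecidableEq B] [Fintype C]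
        [DecidableEq C] [Inhabited (A × B × C)]
        (μ : Measure (unitaryGroup (A × B × C) ℂ)) [μ.IsHaarMeasure] [IsProbabilityMeasure μ]
        (M : Matrix (A × B) (A × B) ℂ), IsStarProjection M →
        M.trace.re ≤ r ^ 2 * (Fintype.card A * Fintype.card B) →
        μ {U | ∃ UA : unitaryGroup A ℂ, ∃ UB : unitaryGroup B ℂ,
            h ^ 2 ≤ ((UA.1 ⊗ₖ UB.1) * rhoAB (haarState U) * (UA.1 ⊗ₖ UB.1)ᴴ * M).trace.re} ≤
          ENNReal.ofReal (Real.exp (-(α * (Fintype.card A * Fintype.card B * Fintype.card C)) +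
            K * ((Fintype.card A : ℝ) ^ 2 + (Fintype.card B : ℝ) ^ 2))) := by
  obtain ⟨ε, hε, hgap⟩ : ∃ ε > 0, r < h - 2 * ε := ⟨(h - r) / 4, by linarith, by linarith⟩
  have hsq : r ^ 2 < (h - 2 * ε) ^ 2 := pow_lt_pow_left₀ hgap hr two_ne_zero
  have hone_lt : 1 < 1 + 2 / ε := lt_add_of_pos_right 1 (by positivity)
  refine ⟨((h - 2 * ε) ^ 2 - r ^ 2) ^ 2 / 2, half_pos (pow_pos (sub_pos.2 hsq) 2),
    2 * Real.log (1 + 2 / ε), mul_pos two_pos (Real.log_pos hone_lt), ?_⟩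
  intro A B C _ _ _ _ _ _ _ μ _ _ M hM htrace
  have hnet : (1 + 2 / ε) ^ (2 * (Fintype.card A ^ 2 + Fintype.card B ^ 2)) =
      Real.exp (2 * Real.log (1 + 2 / ε) *
        ((Fintype.card A : ℝ) ^ 2 + (Fintype.card B : ℝ) ^ 2)) := by
    rw [← Real.exp_log (zero_lt_one.trans hone_lt), ← Real.exp_nat_mul, Real.log_exp]
    push_cast
    ring_nf
  rw [add_comm, Real.exp_add, ← hnet]
  exact measure_exists_le_trace_localUnitary_conj_le μ hM hr htrace hε hgap.le hh

/-- **Theorem 1** (informal): for `1/2 < h ≤ 1` (so `δ = h² - 1/4 > 0`) there are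
constants `α > 0` and `C > 0` such that the Haar probability that one EPR pair is
LU-distillable from `ρ_AB` at fidelity `h` satisfies
`log Prob ≤ -α d + C (d_A² + d_B²)`, i.e. `Prob ≤ exp(-α d + C (d_A² + d_B²))`. -/
theorem epr_distillation_exponentially_suppressed (h : ℝ) (hh : 1 / 2 < h) (hh1 : h ≤ 1) :
    ∃ α : ℝ, 0 < α ∧ ∃ C : ℝ, 0 < C ∧
      ∀ (nA nB nC : ℕ) (hA : 0 < nA) (hB : 0 < nB), 0 < nC →
      ∀ μ : Measure (Matrix.unitaryGroup (QubitIdx nA × QubitIdx nB × QubitIdx nC) ℂ),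
        μ.IsHaarMeasure → IsProbabilityMeasure μ →
        μ {U | ∃ UA : Matrix.unitaryGroup (QubitIdx nA) ℂ,
               ∃ UB : Matrix.unitaryGroup (QubitIdx nB) ℂ,
               h ^ 2 ≤ (Matrix.trace ((UA.1 ⊗ₖ UB.1) * rhoAB (haarState U) *
                          (UA.1 ⊗ₖ UB.1)ᴴ * eprProjOne nA nB hA hB)).re}
          ≤ ENNReal.ofReal (Real.exp
              (-(α * 2 ^ (nA + nB + nC))
                + C * (((2 : ℝ) ^ nA) ^ 2 + ((2 : ℝ) ^ nB) ^ 2))) := by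
  obtain ⟨α, hα, C, hC, hbound⟩ :=
    epr_distillation_exponentially_suppressed_general one_half_pos.le hh hh1
  refine ⟨α, hα, C, hC, fun nA nB nC hA hB _ μ _ _ => ?_⟩
  have htrace : (eprProjOne nA nB hA hB).trace.re ≤
      (1 / 2) ^ 2 * (Fintype.card (QubitIdx nA) * Fintype.card (QubitIdx nB)) := by
    rw [trace_eprProjOne, Complex.ofReal_re]
  simpa [pow_add] using
    hbound _ _ _ μ (eprProjOne nA nB hA hB) (isStarProjection_eprProjOne hA hB) htrace
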